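/- Let ω, R > 0 and set R_g := R − tanh(ω·R)/ω. Define Ψ : (0,∞) → ℝ by Ψ(r) = sinh(ω·r)/(ω·r·cosh(ω·R)) for 0 < r ≤ R and Ψ(r) = 1 − R_g/r for r > R. Then: (i) Ψ is continuously differentiable on (0,∞); (ii) Ψ(r) > 0 for all r > 0; (iii) the function χ(r) := r·Ψ(r) satisfies χ''(r) = ω²·χ(r) for 0 < r < R and χ''(r) = 0 for r > R; (iv) Ψ(r) → 1 as r → ∞ and Ψ(r) → 1/cosh(ω·R) as r → 0⁺. -/

import Mathlib

open Real Filter Topology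

/-- The matched homogeneous-star solution:
with `R_g = R − tanh(ωR)/ω`, the function `Ψ` given by
`Ψ(r) = sinh(ωr)/(ωr·cosh(ωR))` for `0 < r ≤ R` and `Ψ(r) = 1 − R_g/r` for
`r > R` is (i) continuously differentiable on `(0,∞)`, (ii) positive,
(iii) `χ(r) := r·Ψ(r)` satisfies `χ'' = ω²χ` on `(0,R)` and `χ'' = 0` on
`(R,∞)`, and (iv) `Ψ(r) → 1` as `r → ∞` and `Ψ(r) → 1/cosh(ωR)` as `r → 0⁺`. -/
theorem homogeneous_star_solution
    (ω R R_g : ℝ) (hω : 0 < ω) (hR : 0 < R)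
    (hRg : R_g = R - Real.tanh (ω * R) / ω)
    (Ψ : ℝ → ℝ)
    (hin : ∀ r : ℝ, 0 < r → r ≤ R →
      Ψ r = Real.sinh (ω * r) / (ω * r * Real.cosh (ω * R)))
    (hout : ∀ r : ℝ, R < r → Ψ r = 1 - R_g / r) :
    ContDiffOn ℝ 1 Ψ (Set.Ioi 0) ∧
    (∀ r : ℝ, 0 < r → 0 < Ψ r) ∧
    (∀ r : ℝ, 0 < r → r < R →
      deriv (deriv (fun s => s * Ψ s)) r = ω ^ 2 * (r * Ψ r)) ∧
    (∀ r : ℝ, R < r → deriv (deriv (fun s => s * Ψ s)) r = 0) ∧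
    Tendsto Ψ atTop (𝓝 1) ∧
    Tendsto Ψ (𝓝[>] 0) (𝓝 (1 / Real.cosh (ω * R))) := by
  have hcR : 0 < Real.cosh (ω * R) := Real.cosh_pos _
  have hsR : 0 < Real.sinh (ω * R) := Real.sinh_pos_iff.2 (mul_pos hω hR)
  have hRg' : R_g = R - Real.sinh (ω * R) / (ω * Real.cosh (ω * R)) := by
    rw [hRg, Real.tanh_eq_sinh_div_cosh]; field_simp
  have hRgR : R_g < R := by
    have : 0 < Real.sinh (ω * R) / (ω * Real.cosh (ω * R)) := by positivity
    linarith
  set f : ℝ → ℝ := fun r => Real.sinh (ω * r) / (ω * Real.cosh (ω * R)) with hf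
  set χ : ℝ → ℝ := fun r => if r ≤ R then f r else r - R_g with hχ
  have hχin : ∀ r, r ≤ R → χ r = f r := fun r hr => by simp [hχ, hr]
  have hχout : ∀ r, R ≤ r → χ r = r - R_g := fun r hr => by
    rcases hr.eq_or_lt with h | h
    · subst h; rw [hχin _ le_rfl, hRg']; simp [hf]
    · simp [hχ, not_le.2 h]
  have hfd : ∀ r, HasDerivAt f (Real.cosh (ω * r) / Real.cosh (ω * R)) r := fun r => by
    have h1 : HasDerivAt (fun r : ℝ => ω * r) ω r := by
      simpa using (hasDerivAt_id r).const_mul ω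
    have h := (h1.sinh).div_const (ω * Real.cosh (ω * R))
    have e : Real.cosh (ω * r) * ω / (ω * Real.cosh (ω * R)) =
        Real.cosh (ω * r) / Real.cosh (ω * R) := by
      rw [mul_comm ω (Real.cosh (ω * R)), mul_div_mul_right _ _ hω.ne']
    rw [e] at h
    exact h
  have hgd : ∀ r, HasDerivAt (fun r : ℝ => r - R_g) 1 r := fun r =>
    (hasDerivAt_id r).sub_const R_g
  have hχd : ∀ r, HasDerivAt χ (Real.cosh (ω * min r R) / Real.cosh (ω * R)) r := fun r => by
    rcases lt_trichotomy r R with h | h | h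
    · rw [min_eq_left h.le]
      refine (hfd r).congr_of_eventuallyEq ?_
      filter_upwards [Iio_mem_nhds h] with s hs using hχin s (le_of_lt hs)
    · subst h
      rw [min_self]
      have h1 : HasDerivWithinAt χ (Real.cosh (ω * r) / Real.cosh (ω * r)) (Set.Iic r) r :=
        ((hfd r).hasDerivWithinAt).congr (fun s hs => hχin s hs) (hχin r le_rfl)
      have h2 : HasDerivWithinAt χ (Real.cosh (ω * r) / Real.cosh (ω * r)) (Set.Ici r) r := by
        rw [div_self hcR.ne']
        exact ((hgd r).hasDerivWithinAt).congr (fun s hs => hχout s hs) (hχout r le_rfl)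
      have h3 := h1.union h2
      rwa [Set.Iic_union_Ici, hasDerivWithinAt_univ] at h3
    · rw [min_eq_right h.le, div_self hcR.ne']
      refine (hgd r).congr_of_eventuallyEq ?_
      filter_upwards [Ioi_mem_nhds h] with s hs using hχout s (le_of_lt hs)
  have hdχ : deriv χ = fun r => Real.cosh (ω * min r R) / Real.cosh (ω * R) :=
    funext fun r => (hχd r).deriv
  have hχC : ContDiff ℝ 1 χ := by
    rw [contDiff_one_iff_deriv]
    refine ⟨fun r => (hχd r).differentiableAt, ?_⟩
    rw [hdχ]
    exact (Real.continuous_cosh.comp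
      (continuous_const.mul (continuous_id.min continuous_const))).div_const _
  have hΨχ : ∀ r, 0 < r → Ψ r = χ r / r := fun r hr => by
    rcases le_or_gt r R with h | h
    · rw [hin r hr h, hχin r h]; simp only [hf]; field_simp
    · rw [hout r h, hχout r h.le]; field_simp
  have hχe : ∀ r, 0 < r → (fun s => s * Ψ s) =ᶠ[𝓝 r] χ := fun r hr => by
    filter_upwards [Ioi_mem_nhds hr] with s hs
    have hs' : (0:ℝ) < s := hs
    rw [hΨχ s hs']; field_simp
  refine ⟨?_, ?_, ?_, ?_, ?_, ?_⟩
  · refine (hχC.contDiffOn.div contDiffOn_id (fun x hx => ne_of_gt hx)).congr ?_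
    intro r hr
    exact hΨχ r hr
  · intro r hr
    rw [hΨχ r hr]
    refine div_pos ?_ hr
    rcases le_or_gt r R with h | h
    · rw [hχin r h]
      have : 0 < Real.sinh (ω * r) := Real.sinh_pos_iff.2 (mul_pos hω hr)
      simp only [hf]; positivity
    · rw [hχout r h.le]; linarith
  · intro r hr hrR
    rw [(hχe r hr).deriv.deriv_eq, hdχ]
    have he : (fun r => Real.cosh (ω * min r R) / Real.cosh (ω * R)) =ᶠ[𝓝 r]
        fun r => Real.cosh (ω * r) / Real.cosh (ω * R) := by
      filter_upwards [Iio_mem_nhds hrR] with s hs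
      rw [min_eq_left (le_of_lt hs)]
    rw [he.deriv_eq]
    have h1 : HasDerivAt (fun r : ℝ => ω * r) ω r := by
      simpa using (hasDerivAt_id r).const_mul ω
    rw [((h1.cosh).div_const (Real.cosh (ω * R))).deriv, hin r hr hrR.le]
    field_simp
  · intro r hr
    rw [(hχe r (hR.trans hr)).deriv.deriv_eq, hdχ]
    have he : (fun r => Real.cosh (ω * min r R) / Real.cosh (ω * R)) =ᶠ[𝓝 r]
        fun _ => Real.cosh (ω * R) / Real.cosh (ω * R) := by
      filter_upwards [Ioi_mem_nhds hr] with s hs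
      rw [min_eq_right (le_of_lt hs)]
    rw [he.deriv_eq, deriv_const]
  · have h : Tendsto (fun r : ℝ => 1 - R_g / r) atTop (𝓝 (1 - 0)) :=
      tendsto_const_nhds.sub (tendsto_const_nhds.div_atTop tendsto_id)
    rw [sub_zero] at h
    refine h.congr' ?_
    filter_upwards [eventually_gt_atTop R] with s hs using (hout s hs).symm
  · have h := (hχd 0).tendsto_slope_zero_right
    rw [min_eq_left hR.le, mul_zero, Real.cosh_zero] at h
    refine h.congr' ?_
    filter_upwards [self_mem_nhdsWithin] with s hs
    have h0 : χ 0 = 0 := by rw [hχin 0 hR.le]; simp [hf]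
    rw [hΨχ s hs, h0, zero_add, sub_zero, smul_eq_mul, div_eq_inv_mul]
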